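/- For REL(Z_n × Z_4, {(1,0),(0,1)}) with n ≥ 3: Player 1 has a winning strategy if n ≡ ±1 (mod 4), and Player 2 has a winning strategy if n ≡ 0 (mod 4) or n ≡ 2 (mod 4). -/

import Mathlib

namespace RelatorGames

variable {G : Type*} [Group G]

/-- The letters available in the relator games: elements of `S` and their inverses. -/
def letters (S : Set G) : Set G := S ∪ (fun g => g⁻¹) '' S

/-- Evaluate a history of moves (most recent letter first) to a group element:
the group element represented by the word built so far. -/
def eval (h : List G) : G := h.reverse.prod

/-- A move `m` is legal after history `h`: it is a letter of `S ∪ S⁻¹` and it is not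
the inverse of the immediately preceding letter (no backtracking). -/
def LegalMove (S : Set G) (h : List G) (m : G) : Prop :=
  m ∈ letters S ∧ ∀ p ∈ h.head?, m ≠ p⁻¹

/-- Appending `m` to the history `h` produces a word equal in `G` to some earlier
prefix of the word (equivalently, the walk in the Cayley graph revisits a vertex). -/
def ClosesCycle (h : List G) (m : G) : Prop :=
  ∃ t, t <:+ h ∧ eval t = eval (m :: h)

/-- A strategy: a choice of next letter given the history (most recent letter first). -/
abbrev Strategy (G : Type*) := List G → G

/-- The sequence of histories arising when the first player (moving at even steps)
uses `σ` and the second player (moving at odd steps) uses `τ`. -/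
def hist (σ τ : Strategy G) : ℕ → List G
  | 0 => []
  | k + 1 =>
      (if k % 2 = 0 then σ (hist σ τ k) else τ (hist σ τ k)) :: hist σ τ k

/-- The move made at step `k` in the play of `σ` against `τ`. -/
def moveAt (σ τ : Strategy G) (k : ℕ) : G :=
  if k % 2 = 0 then σ (hist σ τ k) else τ (hist σ τ k)

/-- Step `j` is uneventful: the move made is legal and does not close a cycle. -/
def Ok (S : Set G) (σ τ : Strategy G) (j : ℕ) : Prop :=
  LegalMove S (hist σ τ j) (moveAt σ τ j) ∧ ¬ ClosesCycle (hist σ τ j) (moveAt σ τ j)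

/-- In the play of `σ` against `τ`, the player moving at steps congruent to `p` mod 2
wins the relator achievement game `REL(G,S)`: at the first eventful step, either it is
that player's turn and they legally close a cycle, or it is the opponent's turn and the
opponent has made an illegal move (in particular, has no legal move). -/
def RelWins (S : Set G) (p : ℕ) (σ τ : Strategy G) : Prop :=
  ∃ k : ℕ, (∀ j < k, Ok S σ τ j) ∧
    ((k % 2 = p ∧ LegalMove S (hist σ τ k) (moveAt σ τ k) ∧
        ClosesCycle (hist σ τ k) (moveAt σ τ k)) ∨
      (k % 2 ≠ p ∧ ¬ LegalMove S (hist σ τ k) (moveAt σ τ k)))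

/-- In the play of `σ` against `τ`, the player moving at steps congruent to `p` mod 2
wins the relator avoidance game `RAV(G,S)`: at the first eventful step it is the
opponent's turn, and the opponent either makes an illegal move (in particular, has no
legal move) or closes a cycle. -/
def RavWins (S : Set G) (p : ℕ) (σ τ : Strategy G) : Prop :=
  ∃ k : ℕ, (∀ j < k, Ok S σ τ j) ∧ k % 2 ≠ p ∧
    (¬ LegalMove S (hist σ τ k) (moveAt σ τ k) ∨ ClosesCycle (hist σ τ k) (moveAt σ τ k))

/-- Player 1 has a winning strategy for `REL(G,S)`. -/
def FirstWinsREL (S : Set G) : Prop :=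
  ∃ σ : Strategy G, ∀ τ : Strategy G, RelWins S 0 σ τ

/-- Player 2 has a winning strategy for `REL(G,S)`. -/
def SecondWinsREL (S : Set G) : Prop :=
  ∃ τ : Strategy G, ∀ σ : Strategy G, RelWins S 1 σ τ

/-- Player 1 has a winning strategy for `RAV(G,S)`. -/
def FirstWinsRAV (S : Set G) : Prop :=
  ∃ σ : Strategy G, ∀ τ : Strategy G, RavWins S 0 σ τ

/-- Player 2 has a winning strategy for `RAV(G,S)`. -/
def SecondWinsRAV (S : Set G) : Prop :=
  ∃ τ : Strategy G, ∀ σ : Strategy G, RavWins S 1 σ τ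

end RelatorGames

/-!
Write `(s, t)` for the vertex `x ^ s * y ^ t`. The winner brings the play to a point `(c, d)` on one
of the axes with `n ≡ c - d (mod m)`, and from then on answers `x` by `y` and `y` by `x`, so that
the play climbs the diagonal `(c + j, d + j)`. An opponent who steps back by `x⁻¹` or `y⁻¹` loses at
once: the other inverse returns to the previous diagonal point. An opponent who keeps climbing
closes no cycle: the visited vertices lie on the initial axis segment or within distance one of the
diagonal, and the walk does not meet their translates by `n ℤ × m ℤ` before `j = n - c`, when the
winner reaches `(n, n - c + d) = (0, 0)`.
-/

namespace RelatorGames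

section Strategies

variable {G : Type*}

theorem hist_succ (σ τ : Strategy G) (k : ℕ) :
    hist σ τ (k + 1) = moveAt σ τ k :: hist σ τ k :=
  rfl

theorem length_hist (σ τ : Strategy G) (k : ℕ) : (hist σ τ k).length = k := by
  induction k with
  | zero => rfl
  | succ k ih => rw [hist_succ, List.length_cons, ih]

theorem reverse_hist_getElem? (σ τ : Strategy G) {k j : ℕ} (hkj : k < j) :
    (hist σ τ j).reverse[k]? = some (moveAt σ τ k) := by
  induction j, hkj using Nat.le_induction with
  | base => simp [hist_succ, length_hist]
  | succ j hj ih =>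
    rwa [hist_succ, List.reverse_cons, List.getElem?_append_left]
    rwa [List.length_reverse, length_hist]

variable [Group G] {S : Set G} {h : List G} {r : G}

/-- The player moving at steps congruent to `p` mod 2 can win every uneventful play that has
reached the history `h`, by following a suitable strategy from there on. -/
def WinsFrom (S : Set G) (p : ℕ) (h : List G) : Prop :=
  ∃ ρ : Strategy G, ∀ σ τ : Strategy G, hist σ τ h.length = h → (∀ j < h.length, Ok S σ τ j) →
    (∀ j, h.length ≤ j → j % 2 = p → moveAt σ τ j = ρ (hist σ τ j)) → RelWins S p σ τ

/-- The player about to move after the history `h` can force a win in `REL(G, S)`. -/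
def MoverWins (S : Set G) (h : List G) : Prop :=
  WinsFrom S (h.length % 2) h

/-- The opponent of the player about to move after the history `h` can force a win in
`REL(G, S)`. -/
def MoverLoses (S : Set G) (h : List G) : Prop :=
  WinsFrom S ((h.length + 1) % 2) h

theorem firstWinsREL_of_moverWins (hw : MoverWins S []) : FirstWinsREL S := by
  obtain ⟨ρ, hρ⟩ := hw
  refine ⟨ρ, fun τ => hρ ρ τ rfl (by simp) fun j _ hj => ?_⟩
  exact if_pos hj

theorem secondWinsREL_of_moverLoses (hl : MoverLoses S []) : SecondWinsREL S := by
  obtain ⟨ρ, hρ⟩ := hl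
  refine ⟨ρ, fun σ => hρ σ ρ rfl (by simp) fun j _ hj => ?_⟩
  exact if_neg (by simp [hj])

theorem moverWins_of_closesCycle (hr : LegalMove S h r) (hc : ClosesCycle h r) :
    MoverWins S h := by
  refine ⟨fun _ => r, fun σ τ hh hok hρ => ⟨h.length, hok, Or.inl ⟨rfl, ?_⟩⟩⟩
  rw [hρ _ le_rfl rfl, hh]
  exact ⟨hr, hc⟩

theorem moverWins_of_moverLoses (hr : LegalMove S h r) (hl : MoverLoses S (r :: h)) :
    MoverWins S h := by
  classical
  by_cases hc : ClosesCycle h r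
  · exact moverWins_of_closesCycle hr hc
  have hparity : ((r :: h).length + 1) % 2 = h.length % 2 := by
    rw [List.length_cons]
    omega
  rw [MoverLoses, hparity] at hl
  obtain ⟨ρ, hρ⟩ := hl
  refine ⟨Function.update ρ h r, fun σ τ hh hok hfollow => ?_⟩
  have hmove : moveAt σ τ h.length = r := by
    rw [hfollow _ le_rfl rfl, hh, Function.update_self]
  refine hρ σ τ ?_ ?_ fun j hj hjp => ?_
  · rw [List.length_cons, hist_succ, hmove, hh]
  · refine Nat.forall_lt_succ_right.2 ⟨hok, ?_⟩
    rw [Ok, hmove, hh]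
    exact ⟨hr, hc⟩
  · rw [List.length_cons] at hj
    have hne : hist σ τ j ≠ h := fun he => by
      have := length_hist σ τ j
      rw [he] at this
      omega
    rw [hfollow j (by omega) hjp, Function.update_of_ne hne]

/-- The strategies against the individual moves `m` are glued together by reading `m` off the
later histories. -/
theorem moverLoses_of_forall
    (hm : ∀ m, LegalMove S h m → ¬ ClosesCycle h m ∧ MoverWins S (m :: h)) :
    MoverLoses S h := by
  have hwin (m : G) (hlegal : LegalMove S h m) : WinsFrom S ((h.length + 1) % 2) (m :: h) :=
    (hm m hlegal).2
  choose! ρ hρ using hwin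
  refine ⟨fun l => ρ (l.reverse[h.length]?.getD 1) l, fun σ τ hh hok hfollow => ?_⟩
  by_cases hlegal : LegalMove S h (moveAt σ τ h.length)
  · refine hρ _ hlegal σ τ ?_ ?_ fun j hj hjp => ?_
    · rw [List.length_cons, hist_succ, hh]
    · refine Nat.forall_lt_succ_right.2 ⟨hok, ?_⟩
      rw [Ok, hh]
      exact ⟨hlegal, (hm _ hlegal).1⟩
    · simp only [hfollow j (Nat.le_of_succ_le hj) hjp, reverse_hist_getElem? σ τ hj,
        Option.getD_some]
  · refine ⟨h.length, hok, Or.inr ⟨by omega, ?_⟩⟩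
    rwa [hh]

end Strategies

section Visited

variable {G : Type*} [Group G] {S : Set G} {h : List G} {k r : G}

/-- The vertices of the Cayley graph through which the walk spelled by the history `h` passes. -/
def visited (h : List G) : Set G :=
  {v | ∃ t, t <:+ h ∧ eval t = v}

theorem eval_cons (k : G) (h : List G) : eval (k :: h) = eval h * k := by
  simp [eval]

theorem eval_replicate (c : ℕ) (x : G) : eval (List.replicate c x) = x ^ c := by
  simp [eval]

theorem closesCycle_iff : ClosesCycle h k ↔ eval (k :: h) ∈ visited h :=
  Iff.rfl

theorem visited_nil : visited ([] : List G) = {1} := by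
  ext v
  simp [visited, eval, eq_comm]

theorem visited_cons (k : G) (h : List G) :
    visited (k :: h) = insert (eval (k :: h)) (visited h) := by
  ext v
  simp only [visited, List.suffix_cons_iff, Set.mem_insert_iff, Set.mem_ofPred_eq, or_and_right,
    exists_or, exists_eq_left, eq_comm]

theorem one_mem_visited (h : List G) : 1 ∈ visited h :=
  ⟨[], List.nil_suffix, rfl⟩

theorem eval_mem_visited (h : List G) : eval h ∈ visited h :=
  ⟨h, List.suffix_rfl, rfl⟩

theorem exists_pow_of_mem_visited_replicate {c : ℕ} {x v : G}
    (hv : v ∈ visited (List.replicate c x)) : ∃ i ≤ c, v = x ^ i := by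
  obtain ⟨t, ht, rfl⟩ := hv
  obtain ⟨hi, hrep⟩ := List.suffix_replicate_iff.1 ht
  exact ⟨t.length, hi, by rw [hrep, eval_replicate, List.length_replicate]⟩

theorem closesCycle_of_mul_eq_one {k₁ k₂ k₃ k₄ : G} (hk : k₁ * k₂ * k₃ * k₄ = 1) :
    ClosesCycle (k₃ :: k₂ :: k₁ :: h) k₄ := by
  have heval : eval (k₄ :: k₃ :: k₂ :: k₁ :: h) = eval h := by
    calc eval (k₄ :: k₃ :: k₂ :: k₁ :: h) = eval h * (k₁ * k₂ * k₃ * k₄) := by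
          simp only [eval_cons, mul_assoc]
      _ = eval h := by rw [hk, mul_one]
  rw [closesCycle_iff, heval]
  simp only [visited_cons, Set.mem_insert_iff, eval_mem_visited, or_true]

theorem legalMove_nil_iff : LegalMove S [] k ↔ k ∈ letters S := by
  simp [LegalMove]

theorem legalMove_cons_iff : LegalMove S (k :: h) r ↔ r ∈ letters S ∧ k * r ≠ 1 := by
  simp [LegalMove, mul_eq_one_iff_eq_inv']

end Visited

/-- The letters of `S` are `x`, `y` and their inverses, where `x` and `y` are independent of
orders `n` and `m`, both at least `3`. -/
structure IndependentLetters {G : Type*} [CommGroup G] (S : Set G) (n m : ℤ) (x y : G) :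
    Prop where
  zpow_mul_zpow_eq_one_iff : ∀ i j : ℤ, x ^ i * y ^ j = 1 ↔ n ∣ i ∧ m ∣ j
  mem_letters_iff : ∀ k, k ∈ letters S ↔ k = x ∨ k = x⁻¹ ∨ k = y ∨ k = y⁻¹
  three_le_left : 3 ≤ n
  three_le_right : 3 ≤ m

theorem not_dvd_of_pos_of_lt {n e : ℤ} (h0 : 0 < e) (hlt : e < n) : ¬ n ∣ e :=
  fun h => (Int.le_of_dvd h0 h).not_gt hlt

namespace IndependentLetters

variable {G : Type*} [CommGroup G] {S : Set G} {n m : ℤ} {x y k r : G} {h : List G}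

theorem symm (H : IndependentLetters S n m x y) : IndependentLetters S m n y x where
  zpow_mul_zpow_eq_one_iff i j := by
    rw [mul_comm, H.zpow_mul_zpow_eq_one_iff, and_comm]
  mem_letters_iff k := by
    rw [H.mem_letters_iff]
    tauto
  three_le_left := H.three_le_right
  three_le_right := H.three_le_left

theorem inv_left (H : IndependentLetters S n m x y) : IndependentLetters S n m x⁻¹ y where
  zpow_mul_zpow_eq_one_iff i j := by
    rw [inv_zpow', H.zpow_mul_zpow_eq_one_iff, dvd_neg]
  mem_letters_iff k := by
    rw [H.mem_letters_iff, inv_inv]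
    tauto
  three_le_left := H.three_le_left
  three_le_right := H.three_le_right

theorem inv_right (H : IndependentLetters S n m x y) : IndependentLetters S n m x y⁻¹ :=
  H.symm.inv_left.symm

theorem zpow_mul_zpow_eq_iff (H : IndependentLetters S n m x y) (i j s t : ℤ) :
    x ^ i * y ^ j = x ^ s * y ^ t ↔ n ∣ i - s ∧ m ∣ j - t := by
  rw [← H.zpow_mul_zpow_eq_one_iff, zpow_sub, zpow_sub, mul_mul_mul_comm, ← mul_inv,
    mul_inv_eq_one]

theorem left_mem_letters (H : IndependentLetters S n m x y) : x ∈ letters S :=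
  (H.mem_letters_iff x).2 (Or.inl rfl)

theorem mul_ne_one (H : IndependentLetters S n m x y) : x * y ≠ 1 := fun h =>
  have hdvd : n ∣ 1 := ((H.zpow_mul_zpow_eq_one_iff 1 1).1 (by simpa using h)).1
  not_dvd_of_pos_of_lt one_pos (by linarith [H.three_le_left]) hdvd

theorem mul_self_ne_one (H : IndependentLetters S n m x y) : x * x ≠ 1 := fun h =>
  have hdvd : n ∣ 2 := ((H.zpow_mul_zpow_eq_one_iff 2 0).1 (by simpa [zpow_ofNat, sq] using h)).1
  not_dvd_of_pos_of_lt two_pos (by linarith [H.three_le_left]) hdvd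

theorem ne (H : IndependentLetters S n m x y) : x ≠ y := fun h =>
  H.inv_right.mul_ne_one (mul_inv_eq_one.2 h)

theorem pow_eq_one (H : IndependentLetters S n m x y) {d : ℕ} (hd : (d : ℤ) = n) :
    x ^ d = 1 := by
  simpa using (H.zpow_mul_zpow_eq_one_iff d 0).2 ⟨hd ▸ dvd_rfl, dvd_zero m⟩

theorem exists_zpow_of_mem_letters (H : IndependentLetters S n m x y) (hk : k ∈ letters S) :
    ∃ a b : ℤ, k = x ^ a * y ^ b ∧ a.natAbs + b.natAbs = 1 := by
  rcases (H.mem_letters_iff k).1 hk with rfl | rfl | rfl | rfl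
  · exact ⟨1, 0, by simp⟩
  · exact ⟨-1, 0, by simp⟩
  · exact ⟨0, 1, by simp⟩
  · exact ⟨0, -1, by simp⟩

theorem ne_one_of_mem_letters (H : IndependentLetters S n m x y) (hk : k ∈ letters S) :
    k ≠ 1 := by
  have hx {n m : ℤ} {x y : G} (H : IndependentLetters S n m x y) : x ≠ 1 := by
    rintro rfl
    exact H.mul_self_ne_one (one_mul 1)
  rcases (H.mem_letters_iff k).1 hk with rfl | rfl | rfl | rfl
  exacts [hx H, hx H.inv_left, hx H.symm, hx H.symm.inv_left]

theorem exists_partner (H : IndependentLetters S n m x y) (hk : k ∈ letters S) :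
    ∃ r, s(k, r) = s(x, y) ∨ s(k, r) = s(x⁻¹, y⁻¹) := by
  rcases (H.mem_letters_iff k).1 hk with rfl | rfl | rfl | rfl
  exacts [⟨y, by simp⟩, ⟨y⁻¹, by simp⟩, ⟨x, by simp⟩, ⟨x⁻¹, by simp⟩]

theorem legalMove_of_sym2_eq (H : IndependentLetters S n m x y) (hkr : s(k, r) = s(x, y)) :
    LegalMove S (k :: h) r := by
  rw [legalMove_cons_iff]
  rcases Sym2.eq_iff.1 hkr with ⟨rfl, rfl⟩ | ⟨rfl, rfl⟩
  · exact ⟨H.symm.left_mem_letters, H.mul_ne_one⟩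
  · exact ⟨H.left_mem_letters, H.symm.mul_ne_one⟩

theorem legalMove_self (H : IndependentLetters S n m x y) : LegalMove S (x :: h) x :=
  legalMove_cons_iff.2 ⟨H.left_mem_letters, H.mul_self_ne_one⟩

theorem not_closesCycle_replicate (H : IndependentLetters S n m x y) {c : ℕ}
    (hc : (c : ℤ) + 1 < n) (hk : LegalMove S (List.replicate c x) k) :
    ¬ ClosesCycle (List.replicate c x) k := by
  rw [closesCycle_iff, eval_cons, eval_replicate]
  intro hmem
  obtain ⟨i, hi, heq⟩ := exists_pow_of_mem_visited_replicate hmem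
  obtain ⟨a, b, rfl, hab⟩ := H.exists_zpow_of_mem_letters hk.1
  have hdvd : n ∣ c + a - i ∧ m ∣ b := by
    have := H.zpow_mul_zpow_eq_iff (c + a) b i 0
    rw [zpow_add, zpow_natCast, zpow_natCast, zpow_zero, mul_one, sub_zero, mul_assoc] at this
    exact this.1 heq
  have hm := H.three_le_right
  obtain rfl : b = 0 := Int.eq_zero_of_dvd_of_natAbs_lt_natAbs hdvd.2 (by omega)
  obtain rfl | rfl : a = 1 ∨ a = -1 := by omega
  · exact not_dvd_of_pos_of_lt (by omega) (by omega) hdvd.1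
  · cases c with
    | zero =>
      obtain rfl : i = 0 := by omega
      have hn : n ∣ 1 := by simpa using hdvd.1
      exact not_dvd_of_pos_of_lt one_pos (by omega) hn
    | succ c =>
      rw [List.replicate_succ, legalMove_cons_iff] at hk
      exact hk.2 (by simp)

end IndependentLetters

section Diagonal

/-- A region of the plane containing the points visited by a walk which starts in the rectangle
`[0, c] × [0, d]` and then climbs `j` steps along the diagonal through `(c, d)`. The point
`(c, d + 1)` is excluded when `d + 2 = m`: it could be reached again from `(n - 1, d + n - 1)`. -/
def DiagonalRegion (m : ℤ) (c d j : ℕ) (s t : ℤ) : Prop :=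
  (0 ≤ s ∧ s ≤ c ∧ 0 ≤ t ∧ t ≤ d) ∨
    (c ≤ s ∧ s ≤ c + j ∧ d ≤ t ∧ t ≤ d + j ∧ ((s - c) - (t - d)).natAbs ≤ 1 ∧
      (d + 2 = m → ¬ (s = c ∧ t = d + 1)))

theorem DiagonalRegion.not_dvd_and_dvd {n m a b s t : ℤ} {c d j : ℕ} (hm : 3 ≤ m)
    (hdm : d + 2 ≤ m) (hdvd : m ∣ n - c + d) (hjn : c + j + 1 < n)
    (hab : a.natAbs + b.natAbs = 1) (hR : DiagonalRegion m c d j s t) :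
    ¬ (n ∣ c + (j + 1) + a - s ∧ m ∣ d + (j + 1) + b - t) := by
  rintro ⟨hdvd_left, hdvd_right⟩
  unfold DiagonalRegion at hR
  have hs : c + (j + 1) + a - s = 0 ∨ c + (j + 1) + a - s = n := by
    by_contra!
    exact not_dvd_of_pos_of_lt (by omega) (by omega) hdvd_left
  rcases hs with hs | hs
  · exact not_dvd_of_pos_of_lt (n := m) (by omega) (by omega) hdvd_right
  · have ht : m ∣ t + 1 := by
      have ht_eq : t + 1 = n - c + d - (d + (j + 1) + b - t) := by omega
      exact ht_eq ▸ dvd_sub hdvd hdvd_right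
    exact not_dvd_of_pos_of_lt (by omega) (by omega) ht

variable {G : Type*} [CommGroup G] {S : Set G} {n m : ℤ} {x y k l r : G} {h : List G}
  {c d j : ℕ}

/-- The history `h` leads to the diagonal point `(c + j, d + j)`, written in the coordinates
`(s, t) ↦ x ^ s * y ^ t`, through points of `DiagonalRegion m c d j` only. -/
structure OnDiagonal (m : ℤ) (x y : G) (c d j : ℕ) (h : List G) : Prop where
  eval_eq : eval h = x ^ (c + j : ℤ) * y ^ (d + j : ℤ)
  diagonalRegion_of_mem : ∀ v ∈ visited h,
    ∃ s t : ℤ, v = x ^ s * y ^ t ∧ DiagonalRegion m c d j s t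

theorem onDiagonal_replicate_left (m : ℤ) (x y : G) (c : ℕ) :
    OnDiagonal m x y c 0 0 (List.replicate c x) where
  eval_eq := by simp [eval_replicate]
  diagonalRegion_of_mem v hv := by
    obtain ⟨i, hi, rfl⟩ := exists_pow_of_mem_visited_replicate hv
    exact ⟨i, 0, by simp, Or.inl (by omega)⟩

theorem onDiagonal_replicate_right (m : ℤ) (x y : G) (d : ℕ) :
    OnDiagonal m x y 0 d 0 (List.replicate d y) where
  eval_eq := by simp [eval_replicate]
  diagonalRegion_of_mem v hv := by
    obtain ⟨i, hi, rfl⟩ := exists_pow_of_mem_visited_replicate hv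
    exact ⟨0, i, by simp, Or.inl (by omega)⟩

namespace OnDiagonal

theorem eval_cons_cons (hh : OnDiagonal m x y c d j h) (hkr : s(k, r) = s(x, y)) :
    eval (r :: k :: h) = x ^ (c + (j + 1) : ℤ) * y ^ (d + (j + 1) : ℤ) := by
  have hmul : k * r = x * y := by
    rcases Sym2.eq_iff.1 hkr with ⟨rfl, rfl⟩ | ⟨rfl, rfl⟩
    exacts [rfl, mul_comm _ _]
  rw [eval_cons, eval_cons, mul_assoc, hmul, hh.eval_eq, mul_mul_mul_comm, ← zpow_add_one,
    ← zpow_add_one, add_assoc, add_assoc]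

theorem exists_diagonalRegion_eval_cons (hh : OnDiagonal m x y c d j h)
    (hkr : s(k, r) = s(x, y)) (hk : d + 2 = m → j = 0 → k ≠ y) :
    ∃ s t : ℤ, eval (k :: h) = x ^ s * y ^ t ∧ DiagonalRegion m c d (j + 1) s t := by
  rw [eval_cons, hh.eval_eq]
  rcases Sym2.eq_iff.1 hkr with ⟨rfl, rfl⟩ | ⟨rfl, rfl⟩
  · refine ⟨c + j + 1, d + j, by rw [zpow_add_one, mul_right_comm], Or.inr ?_⟩
    omega
  · refine ⟨c + j, d + j + 1, by rw [zpow_add_one, mul_assoc], Or.inr ?_⟩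
    have hj : d + 2 = m → j ≠ 0 := fun hd hj => hk hd hj rfl
    omega

theorem cons_cons (hh : OnDiagonal m x y c d j h) (hkr : s(k, r) = s(x, y))
    (hk : d + 2 = m → j = 0 → k ≠ y) : OnDiagonal m x y c d (j + 1) (r :: k :: h) where
  eval_eq := by
    rw [hh.eval_cons_cons hkr]
    push_cast
    rfl
  diagonalRegion_of_mem v hv := by
    rw [visited_cons, visited_cons] at hv
    rcases hv with rfl | rfl | hv
    · refine ⟨_, _, hh.eval_cons_cons hkr, Or.inr ?_⟩
      omega
    · exact hh.exists_diagonalRegion_eval_cons hkr hk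
    · obtain ⟨s, t, rfl, hR⟩ := hh.diagonalRegion_of_mem v hv
      refine ⟨s, t, rfl, ?_⟩
      unfold DiagonalRegion at *
      omega

theorem not_closesCycle (H : IndependentLetters S n m x y) (hdm : d + 2 ≤ m)
    (hdvd : m ∣ n - c + d) (hjn : c + j + 1 < n) (hh : OnDiagonal m x y c d j h)
    (hkr : s(k, r) = s(x, y)) (hl : LegalMove S (r :: k :: h) l) :
    ¬ ClosesCycle (r :: k :: h) l := by
  rw [legalMove_cons_iff] at hl
  rw [closesCycle_iff, visited_cons, visited_cons]
  rintro (hv | hv | hv)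
  · rw [eval_cons, mul_eq_left] at hv
    exact H.ne_one_of_mem_letters hl.1 hv
  · rw [eval_cons, eval_cons, mul_assoc, mul_eq_left] at hv
    exact hl.2 hv
  · obtain ⟨s, t, hst, hR⟩ := hh.diagonalRegion_of_mem _ hv
    obtain ⟨a, b, rfl, hab⟩ := H.exists_zpow_of_mem_letters hl.1
    rw [eval_cons, hh.eval_cons_cons hkr, mul_mul_mul_comm, ← zpow_add, ← zpow_add,
      H.zpow_mul_zpow_eq_iff] at hst
    exact hR.not_dvd_and_dvd H.three_le_right hdm hdvd hjn hab hst

theorem closesCycle_of_add_eq (H : IndependentLetters S n m x y) (hdvd : m ∣ n - c + d)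
    (hjn : c + j + 1 = n) (hh : OnDiagonal m x y c d j h) (hkr : s(k, r) = s(x, y)) :
    ClosesCycle (k :: h) r := by
  have heval : eval (r :: k :: h) = 1 := by
    rw [hh.eval_cons_cons hkr, H.zpow_mul_zpow_eq_one_iff]
    constructor
    · exact Dvd.intro 1 (by omega)
    · convert hdvd using 1
      omega
  rw [closesCycle_iff, heval]
  exact one_mem_visited _

end OnDiagonal

theorem closesCycle_of_sym2_eq_inv {k' r' : G} (hkr : s(k, r) = s(x, y))
    (hkr' : s(k', r') = s(x⁻¹, y⁻¹)) : ClosesCycle (k' :: r :: k :: h) r' := by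
  apply closesCycle_of_mul_eq_one
  rcases Sym2.eq_iff.1 hkr with ⟨rfl, rfl⟩ | ⟨rfl, rfl⟩ <;>
    rcases Sym2.eq_iff.1 hkr' with ⟨rfl, rfl⟩ | ⟨rfl, rfl⟩ <;> simp

theorem moverWins_of_onDiagonal (H : IndependentLetters S n m x y) (hdm : d + 2 ≤ m)
    (hdvd : m ∣ n - c + d) (hjn : c + j < n) (hh : OnDiagonal m x y c d j h)
    (hkr : s(k, r) = s(x, y)) (hk : d + 2 = m → j = 0 → k ≠ y) : MoverWins S (k :: h) := by
  obtain ⟨N, hN⟩ : ∃ N : ℕ, c + j + 1 + N = n := ⟨(n - (c + j + 1)).toNat, by omega⟩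
  induction N generalizing j h k r with
  | zero =>
    exact moverWins_of_closesCycle (H.legalMove_of_sym2_eq hkr)
      (hh.closesCycle_of_add_eq H hdvd (by omega) hkr)
  | succ N ih =>
    refine moverWins_of_moverLoses (H.legalMove_of_sym2_eq hkr) (moverLoses_of_forall ?_)
    refine fun l hl => ⟨hh.not_closesCycle H hdm hdvd (by omega) hkr hl, ?_⟩
    obtain ⟨r', hforward | hback⟩ := H.exists_partner hl.1
    · exact ih (by omega) (hh.cons_cons hkr hk) hforward (by omega) (by omega)
    · exact moverWins_of_closesCycle (H.inv_left.inv_right.legalMove_of_sym2_eq hback)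
        (closesCycle_of_sym2_eq_inv hkr hback)

end Diagonal

section Openings

variable {G : Type*} [CommGroup G] {S : Set G} {n m : ℤ} {x y : G}

theorem moverLoses_replicate_left (H : IndependentLetters S n m x y) {c : ℕ} (hcn : c + 1 < n)
    (hdvd : m ∣ n - c) : MoverLoses S (List.replicate c x) := by
  have hm := H.three_le_right
  refine moverLoses_of_forall fun k hk => ⟨H.not_closesCycle_replicate hcn hk, ?_⟩
  have hwin {y k r : G} (H : IndependentLetters S n m x y) (hkr : s(k, r) = s(x, y)) :
      MoverWins S (k :: List.replicate c x) :=
    moverWins_of_onDiagonal H (by omega) (by simpa using hdvd) (by omega)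
      (onDiagonal_replicate_left m x y c) hkr (by omega)
  rcases (H.mem_letters_iff k).1 hk.1 with rfl | rfl | rfl | rfl
  · exact hwin H rfl
  · cases c with
    | zero =>
      exact moverWins_of_onDiagonal H.inv_left (by omega) (by simpa using hdvd) (by omega)
        (onDiagonal_replicate_left m x⁻¹ y 0) rfl (by omega)
    | succ c => simp [List.replicate_succ, legalMove_cons_iff] at hk
  · exact hwin H Sym2.eq_swap
  · exact hwin H.inv_right Sym2.eq_swap

theorem moverLoses_replicate_right (H : IndependentLetters S n m x y) {d : ℕ} (hdm : d + 2 ≤ m)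
    (hdvd : m ∣ n + d) : MoverLoses S (List.replicate d y) := by
  have hn := H.three_le_left
  have hm := H.three_le_right
  refine moverLoses_of_forall fun k hk => ⟨H.symm.not_closesCycle_replicate (by omega) hk, ?_⟩
  have hwin {x k r : G} (H : IndependentLetters S n m x y) (hkr : s(k, r) = s(x, y))
      (hk : d + 2 = m → k ≠ y) : MoverWins S (k :: List.replicate d y) :=
    moverWins_of_onDiagonal H hdm (by simpa using hdvd) (by omega)
      (onDiagonal_replicate_right m x y d) hkr fun hd _ => hk hd
  rcases (H.mem_letters_iff k).1 hk.1 with rfl | rfl | rfl | rfl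
  · exact hwin H rfl fun _ => H.ne
  · exact hwin H.inv_left rfl fun _ => H.inv_left.ne
  · rcases eq_or_ne (d + 2 : ℤ) m with hd | hd
    · refine moverWins_of_closesCycle H.symm.legalMove_self ?_
      rw [closesCycle_iff, ← List.replicate_succ, ← List.replicate_succ, eval_replicate,
        H.symm.pow_eq_one (by exact_mod_cast hd)]
      exact one_mem_visited _
    · exact hwin H Sym2.eq_swap fun hd' => absurd hd' hd
  · cases d with
    | zero =>
      exact moverWins_of_onDiagonal H.inv_right hdm (by simpa using hdvd) (by omega)
        (onDiagonal_replicate_left m x y⁻¹ 0) Sym2.eq_swap (by omega)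
    | succ d => simp [List.replicate_succ, legalMove_cons_iff] at hk

theorem firstWinsREL_of_dvd_sub_one (H : IndependentLetters S n m x y) (hdvd : m ∣ n - 1) :
    FirstWinsREL S := by
  have hn := H.three_le_left
  have hloses : MoverLoses S [x] :=
    moverLoses_replicate_left H (c := 1) (by omega) (by exact_mod_cast hdvd)
  exact firstWinsREL_of_moverWins
    (moverWins_of_moverLoses (legalMove_nil_iff.2 H.left_mem_letters) hloses)

theorem firstWinsREL_of_dvd_add_one (H : IndependentLetters S n m x y) (hdvd : m ∣ n + 1) :
    FirstWinsREL S := by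
  have hm := H.three_le_right
  have hloses : MoverLoses S [y] :=
    moverLoses_replicate_right H (d := 1) (by omega) (by exact_mod_cast hdvd)
  exact firstWinsREL_of_moverWins
    (moverWins_of_moverLoses (legalMove_nil_iff.2 H.symm.left_mem_letters) hloses)

theorem secondWinsREL_of_dvd (H : IndependentLetters S n m x y) (hdvd : m ∣ n) :
    SecondWinsREL S := by
  have hn := H.three_le_left
  exact secondWinsREL_of_moverLoses
    (moverLoses_replicate_left H (c := 0) (by omega) (by simpa using hdvd))

/-- Player 2 repeats the first move and then climbs the diagonal from `(±2, 0)` or `(0, ±2)`. -/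
theorem secondWinsREL_of_dvd_sub_two_of_dvd_add_two (H : IndependentLetters S n m x y)
    (hsub : m ∣ n - 2) (hadd : m ∣ n + 2) : SecondWinsREL S := by
  have hn := H.three_le_left
  have hm : 4 ≤ m := by
    have hfour : m ∣ 4 := by simpa using dvd_sub hadd hsub
    rcases H.three_le_right.eq_or_lt with rfl | hlt
    · norm_num at hfour
    · exact hlt
  have hx {x y : G} (H : IndependentLetters S n m x y) : MoverWins S [x] := by
    have := Int.le_of_dvd (by omega) hsub
    exact moverWins_of_moverLoses H.legalMove_self
      (moverLoses_replicate_left H (c := 2) (by omega) (by exact_mod_cast hsub))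
  have hy {x y : G} (H : IndependentLetters S n m x y) : MoverWins S [y] :=
    moverWins_of_moverLoses H.symm.legalMove_self
      (moverLoses_replicate_right H (d := 2) (by omega) (by exact_mod_cast hadd))
  refine secondWinsREL_of_moverLoses (moverLoses_of_forall fun k hk =>
    ⟨H.not_closesCycle_replicate (c := 0) (by omega) hk, ?_⟩)
  rcases (H.mem_letters_iff k).1 hk.1 with rfl | rfl | rfl | rfl
  exacts [hx H, hx H.inv_left, hy H, hy H.inv_right]

end Openings

theorem independentLetters_zmod_prod {n m : ℕ} (hn : 3 ≤ n) (hm : 3 ≤ m) :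
    IndependentLetters
      ({Multiplicative.ofAdd ((1, 0) : ZMod n × ZMod m),
          Multiplicative.ofAdd ((0, 1) : ZMod n × ZMod m)} :
        Set (Multiplicative (ZMod n × ZMod m)))
      n m (Multiplicative.ofAdd (1, 0)) (Multiplicative.ofAdd (0, 1)) where
  zpow_mul_zpow_eq_one_iff i j := by
    rw [← ofAdd_zsmul, ← ofAdd_zsmul, ← ofAdd_add, ofAdd_eq_one]
    simp [Prod.ext_iff, ZMod.intCast_zmod_eq_zero_iff_dvd]
  mem_letters_iff k := by
    simp only [letters, Set.mem_union, Set.mem_insert_iff, Set.mem_singleton_iff,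
      Set.image_insert_eq, Set.image_singleton]
    tauto
  three_le_left := by exact_mod_cast hn
  three_le_right := by exact_mod_cast hm

end RelatorGames

open RelatorGames in
theorem rel_product_cyclic_z4_general {G : Type*} [CommGroup G] {S : Set G} {n m : ℤ} {x y : G}
    (H : IndependentLetters S n m x y) :
    (m ∣ n - 1 ∨ m ∣ n + 1 → FirstWinsREL S) ∧
      (m ∣ n ∨ m ∣ n - 2 ∧ m ∣ n + 2 → SecondWinsREL S) :=
  ⟨fun h => h.elim (firstWinsREL_of_dvd_sub_one H) (firstWinsREL_of_dvd_add_one H),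
    fun h => h.elim (secondWinsREL_of_dvd H) fun h' =>
      secondWinsREL_of_dvd_sub_two_of_dvd_add_two H h'.1 h'.2⟩

open RelatorGames in
/-- In `REL(ℤ_n × ℤ_4, {(1,0),(0,1)})` with `n ≥ 3`: Player 1 wins
if `n ≡ ±1 (mod 4)`, and Player 2 wins if `n ≡ 0` or `2 (mod 4)`. -/
theorem rel_product_cyclic_z4 (n : ℕ) (hn : 3 ≤ n) :
    ((n % 4 = 1 ∨ n % 4 = 3) →
      FirstWinsREL
        ({Multiplicative.ofAdd ((1, 0) : ZMod n × ZMod 4),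
            Multiplicative.ofAdd ((0, 1) : ZMod n × ZMod 4)} :
          Set (Multiplicative (ZMod n × ZMod 4)))) ∧
    ((n % 4 = 0 ∨ n % 4 = 2) →
      SecondWinsREL
        ({Multiplicative.ofAdd ((1, 0) : ZMod n × ZMod 4),
            Multiplicative.ofAdd ((0, 1) : ZMod n × ZMod 4)} :
          Set (Multiplicative (ZMod n × ZMod 4)))) := by
  have hgeneral :=
    rel_product_cyclic_z4_general (independentLetters_zmod_prod hn (m := 4) (by simp))
  exact ⟨fun h => hgeneral.1 (by omega), fun h => hgeneral.2 (by omega)⟩
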